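/- Let A be an N×N Jacobi matrix with eigenvalues λ_k, normalized eigenvectors φ_k ((φ_k)_1 = 1) and ρ_k = ⟨φ_k, φ_k⟩, and let r(t) = Σ_{k=1}^N (1/ρ_k) S(t, λ_k) be its response function. Then for every integer n ≥ 0 one has (A^n)_{11} = Σ_{k=1}^N λ_k^n / ρ_k, and r is real-analytic on ℝ with r^{(2n)}(0) = 0 and r^{(2n+1)}(0) = (−1)^n (A^n)_{11} for all n ≥ 0; in particular r'(0) = 1, r'''(0) = −b_1 and r^{(5)}(0) = b_1² + a_1². -/

import Mathlib

open MeasureTheory Real Matrix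

/-- `S t λ` solves `S'' = -λ S`, `S 0 = 0`, `S' 0 = 1`. -/
noncomputable def S (t lam : ℝ) : ℝ :=
  if 0 < lam then Real.sin (Real.sqrt lam * t) / Real.sqrt lam
  else if lam < 0 then Real.sinh (Real.sqrt (-lam) * t) / Real.sqrt (-lam)
  else t

/-- An `N × N` Jacobi matrix: real symmetric tridiagonal with positive off-diagonal entries. -/
def IsJacobi {N : ℕ} (A : Matrix (Fin N) (Fin N) ℝ) : Prop :=
  (∀ i j, A i j = A j i) ∧
  (∀ i j : Fin N, (i : ℕ) + 1 < (j : ℕ) → A i j = 0) ∧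
  (∀ i j : Fin N, (i : ℕ) + 1 = (j : ℕ) → 0 < A i j)

/-- The derivative of `S` in time. -/
noncomputable def Saux (t lam : ℝ) : ℝ :=
  if 0 < lam then Real.cos (Real.sqrt lam * t)
  else if lam < 0 then Real.cosh (Real.sqrt (-lam) * t)
  else 1

lemma S_hasDeriv (t lam : ℝ) : HasDerivAt (fun t => S t lam) (Saux t lam) t := by
  unfold S Saux
  split_ifs with h1 h2
  · have hs : Real.sqrt lam ≠ 0 := (Real.sqrt_pos.2 h1).ne'
    have h := (((hasDerivAt_id' t).const_mul (Real.sqrt lam)).sin).div_const (Real.sqrt lam)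
    rw [mul_one, mul_div_cancel_right₀ _ hs] at h
    exact h
  · have hs : Real.sqrt (-lam) ≠ 0 := (Real.sqrt_pos.2 (by linarith)).ne'
    have h := (((hasDerivAt_id' t).const_mul (Real.sqrt (-lam))).sinh).div_const (Real.sqrt (-lam))
    rw [mul_one, mul_div_cancel_right₀ _ hs] at h
    exact h
  · exact hasDerivAt_id t

lemma Saux_hasDeriv (t lam : ℝ) : HasDerivAt (fun t => Saux t lam) (-lam * S t lam) t := by
  unfold S Saux
  split_ifs with h1 h2
  · have hs : Real.sqrt lam ≠ 0 := (Real.sqrt_pos.2 h1).ne'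
    have h := (((hasDerivAt_id' t).const_mul (Real.sqrt lam)).cos)
    convert h using 1
    have := Real.mul_self_sqrt h1.le
    field_simp
    rw [pow_two, this]
  · have hs : Real.sqrt (-lam) ≠ 0 := (Real.sqrt_pos.2 (by linarith)).ne'
    have h := (((hasDerivAt_id' t).const_mul (Real.sqrt (-lam))).cosh)
    convert h using 1
    have := Real.mul_self_sqrt (show 0 ≤ -lam by linarith)
    field_simp
    rw [pow_two, this]
    ring
  · have : lam = 0 := by linarith
    subst this
    simpa using hasDerivAt_const t (1 : ℝ)

lemma S_zero_left (lam : ℝ) : S 0 lam = 0 := by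
  unfold S; split_ifs <;> simp

lemma Saux_zero_left (lam : ℝ) : Saux 0 lam = 1 := by
  unfold Saux; split_ifs <;> simp

lemma S_analytic (lam : ℝ) (x : ℝ) : AnalyticAt ℝ (fun t => S t lam) x := by
  unfold S
  split_ifs with h1 h2
  · have : AnalyticAt ℝ (fun t : ℝ => Real.sqrt lam * t) x := analyticAt_const.mul analyticAt_id
    have h := (Real.analyticAt_sin (x := Real.sqrt lam * x)).fun_comp this
    exact h.div_const
  · have : AnalyticAt ℝ (fun t : ℝ => Real.sqrt (-lam) * t) x := analyticAt_const.mul analyticAt_id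
    have h := (Real.analyticAt_sinh (x := Real.sqrt (-lam) * x)).fun_comp this
    exact h.div_const
  · exact analyticAt_id

lemma r_deriv_odd {N : ℕ} (c lam : Fin N → ℝ) :
    deriv (fun t => ∑ k, c k * S t (lam k)) = fun t => ∑ k, c k * Saux t (lam k) := by
  funext t
  exact (HasDerivAt.fun_sum fun k _ => (S_hasDeriv t (lam k)).const_mul (c k)).deriv

lemma r_deriv_even {N : ℕ} (c lam : Fin N → ℝ) :
    deriv (fun t => ∑ k, c k * Saux t (lam k)) = fun t => ∑ k, (c k * -lam k) * S t (lam k) := by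
  funext t
  have := (HasDerivAt.fun_sum (u := Finset.univ)
    fun k _ => (Saux_hasDeriv t (lam k)).const_mul (c k)).deriv
  rw [this]
  exact Finset.sum_congr rfl fun k _ => by ring

lemma r_iter {N : ℕ} (c lam : Fin N → ℝ) (n : ℕ) :
    iteratedDeriv (2 * n) (fun t => ∑ k, c k * S t (lam k)) =
      fun t => ∑ k, (c k * (-lam k) ^ n) * S t (lam k) := by
  induction n with
  | zero => simp
  | succ n ih =>
    rw [show 2 * (n + 1) = 2 * n + 1 + 1 by ring, iteratedDeriv_succ, iteratedDeriv_succ, ih,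
      r_deriv_odd, r_deriv_even]
    funext t
    exact Finset.sum_congr rfl fun k _ => by ring

lemma moments {N : ℕ} (A : Matrix (Fin N) (Fin N) ℝ) (hA : ∀ i j, A i j = A j i)
    (lam : Fin N → ℝ) (φ : Fin N → Fin N → ℝ) (ρ : Fin N → ℝ) (z : Fin N)
    (hlam : StrictMono lam)
    (heig : ∀ k, A.mulVec (φ k) = lam k • φ k)
    (hφ1 : ∀ k, φ k z = 1)
    (hρ : ∀ k, ρ k = ∑ i, φ k i * φ k i) (n : ℕ) :
    (A ^ n) z z = ∑ k, lam k ^ n / ρ k := by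
  have hρ0 : ∀ k, ρ k ≠ 0 := by
    intro k
    rw [hρ]
    refine (Finset.sum_pos' (fun i _ => mul_self_nonneg _) ⟨z, Finset.mem_univ _, ?_⟩).ne'
    rw [hφ1]; norm_num
  have hT : Aᵀ = A := by ext i j; exact hA j i
  have horth : ∀ k l, k ≠ l → φ k ⬝ᵥ φ l = 0 := by
    intro k l hkl
    have h1 : φ k ⬝ᵥ A *ᵥ φ l = (A *ᵥ φ k) ⬝ᵥ φ l := by
      rw [Matrix.dotProduct_mulVec, ← Matrix.mulVec_transpose, hT]
    rw [heig, heig, dotProduct_smul, smul_dotProduct, smul_eq_mul, smul_eq_mul] at h1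
    have h2 : lam l - lam k ≠ 0 := sub_ne_zero.2 fun h => hkl (hlam.injective h).symm
    have : (lam l - lam k) * (φ k ⬝ᵥ φ l) = 0 := by linarith
    exact (mul_eq_zero.1 this).resolve_left h2
  let Q : Matrix (Fin N) (Fin N) ℝ := Matrix.of φ
  have hQ : Q * (Qᵀ * Matrix.diagonal (fun k => (ρ k)⁻¹)) = 1 := by
    rw [← Matrix.mul_assoc]
    ext k l
    rw [Matrix.mul_diagonal]
    have : (Q * Qᵀ) k l = φ k ⬝ᵥ φ l := rfl
    rw [this]
    by_cases h : k = l
    · subst h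
      have : φ k ⬝ᵥ φ k = ρ k := (hρ k).symm
      rw [this, Matrix.one_apply_eq, mul_inv_cancel₀ (hρ0 k)]
    · rw [horth k l h, Matrix.one_apply_ne h, zero_mul]
  have hQ' := mul_eq_one_comm.1 hQ
  have hpow : ∀ n k, (A ^ n) *ᵥ (φ k) = (lam k ^ n) • φ k := by
    intro n k
    induction n with
    | zero => simp
    | succ n ih =>
      rw [pow_succ, ← Matrix.mulVec_mulVec, heig, Matrix.mulVec_smul, ih, smul_smul, pow_succ,
        mul_comm]
  have hAQ : A ^ n * Qᵀ = Qᵀ * Matrix.diagonal (fun k => lam k ^ n) := by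
    ext i k
    rw [Matrix.mul_diagonal]
    have h := congrFun (hpow n k) i
    have e : (A ^ n * Qᵀ) i k = ((A ^ n) *ᵥ (φ k)) i := rfl
    rw [e, h]
    simp [Q, mul_comm]
  have hfin : A ^ n = Qᵀ * Matrix.diagonal (fun k => lam k ^ n * (ρ k)⁻¹) * Q := by
    calc A ^ n = A ^ n * (Qᵀ * Matrix.diagonal (fun k => (ρ k)⁻¹) * Q) := by rw [hQ', mul_one]
      _ = (A ^ n * Qᵀ) * Matrix.diagonal (fun k => (ρ k)⁻¹) * Q := by
        simp only [Matrix.mul_assoc]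
      _ = _ := by
        rw [hAQ, Matrix.mul_assoc Qᵀ, Matrix.diagonal_mul_diagonal]
  rw [hfin, Matrix.mul_apply]
  refine Finset.sum_congr rfl fun k _ => ?_
  rw [Matrix.mul_diagonal]
  simp [Q, hφ1, div_eq_mul_inv]

/-- moments of the spectral measure, analyticity of the response
function `r`, and the trace-type formulas for its derivatives at `0`. -/
theorem stmt4 {N : ℕ} (hN : 2 ≤ N) (A : Matrix (Fin N) (Fin N) ℝ) (hA : IsJacobi A)
    (lam : Fin N → ℝ) (φ : Fin N → Fin N → ℝ) (ρ : Fin N → ℝ)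
    (hlam : StrictMono lam)
    (heig : ∀ k, A.mulVec (φ k) = lam k • φ k)
    (hφ1 : ∀ k, φ k ⟨0, by omega⟩ = 1)
    (hρ : ∀ k, ρ k = ∑ i, φ k i * φ k i)
    (r : ℝ → ℝ) (hr : r = fun t => ∑ k, (1 / ρ k) * S t (lam k)) :
    (∀ n : ℕ, (A ^ n) ⟨0, by omega⟩ ⟨0, by omega⟩ = ∑ k, lam k ^ n / ρ k) ∧
    AnalyticOnNhd ℝ r Set.univ ∧
    (∀ n : ℕ, iteratedDeriv (2 * n) r 0 = 0) ∧
    (∀ n : ℕ, iteratedDeriv (2 * n + 1) r 0 =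
      (-1 : ℝ) ^ n * (A ^ n) ⟨0, by omega⟩ ⟨0, by omega⟩) ∧
    iteratedDeriv 1 r 0 = 1 ∧
    iteratedDeriv 3 r 0 = -A ⟨0, by omega⟩ ⟨0, by omega⟩ ∧
    iteratedDeriv 5 r 0 =
      A ⟨0, by omega⟩ ⟨0, by omega⟩ ^ 2 + A ⟨0, by omega⟩ ⟨1, by omega⟩ ^ 2 := by
  have hm := moments A hA.1 lam φ ρ ⟨0, by omega⟩ hlam heig hφ1 hρ
  have hodd : ∀ n : ℕ, iteratedDeriv (2 * n + 1) r 0 =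
      (-1 : ℝ) ^ n * (A ^ n) ⟨0, by omega⟩ ⟨0, by omega⟩ := by
    intro n
    rw [iteratedDeriv_succ, hr, r_iter (fun k => 1 / ρ k), r_deriv_odd, hm, Finset.mul_sum]
    refine Finset.sum_congr rfl fun k _ => ?_
    rw [Saux_zero_left, neg_pow]
    ring
  refine ⟨hm, ?_, ?_, hodd, ?_, ?_, ?_⟩
  · intro x _
    rw [hr]
    exact Finset.analyticAt_fun_sum _ fun k _ => analyticAt_const.mul (S_analytic (lam k) x)
  · intro n
    rw [hr, r_iter (fun k => 1 / ρ k)]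
    simp [S_zero_left]
  · simpa using hodd 0
  · simpa using hodd 1
  · have h := hodd 2
    norm_num at h
    rw [h, pow_two, Matrix.mul_apply]
    rw [Finset.sum_eq_add_of_mem (⟨0, by omega⟩ : Fin N) ⟨1, by omega⟩ (Finset.mem_univ _)
      (Finset.mem_univ _) (by simp)]
    · rw [hA.1 ⟨1, by omega⟩ ⟨0, by omega⟩]; ring
    · rintro ⟨c, hc⟩ _ ⟨h0, h1⟩
      rw [hA.2.1 ⟨0, by omega⟩ ⟨c, hc⟩, zero_mul]
      simp at h0 h1 ⊢
      omega
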